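/- Fix a nonempty subset B of S with |B| ≥ 2, let A := Bᶜ, fix a nonempty subset D of B and a real p > 1, and let f : Σ_B → ℝ be f(x) := ∏_{j∈D} x_j^{p+1}. Then there exists F : Σ → ℝ in 𝓓_{A∪D} such that: (i) F(x) = f(x_B) for all x ∈ Σ_{B,0}; (ii) (𝔏F)(x) = (𝔏_B f)(x_B) for all x ∈ Σ_{B,0} with x_j > 0 for every j ∈ B; and (iii) (𝔏F)(x) = 0 whenever ∏_{j∈D} x_j = 0. -/

import Mathlib

/-!
The idea is to extend `f` by composing it with linear coordinates adapted to the vectors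
`vvec r i`, `i ∉ B`, and to cut off in the remaining coordinates.

The forms `γ k = lin (u k)`, `k ∈ B`, are annihilated by `vvec r i` for every `i ∉ B`, and they map
`vvec r j`, `j ∈ B`, to the corresponding vector of the trace chain (`proj_vvec_mem`). Together with
the equality of the two second order terms (`second_order_trace`, a consequence of the invariance
of `m`), this shows that `∏ k ∈ D, γ k ^ (p + 1)` satisfies the second and third requirements. It
need not vanish on the faces `x k = 0`, `k ∈ D`, and a cutoff has to be introduced without spoiling
the derivatives along `vvec r i`.

The Green functions of the chain killed on `B` provide forms `τ j = lin (w j)`, `j ∉ B`, with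
`vvec r i` acting as a nonzero multiple of `∂ / ∂ (τ i)`, and vanishing when `x` is supported on `B`.
The extension is the product over `k ∈ D` of the factors
`γ k ^ (p + 1) * ∏ j, χ (τ j / γ k)`, set to zero where `γ k ≤ 0`, where `χ = 1` on `[-1, 1]` and
`χ = 0` off `(-R, R)`. The derivative of a factor along `vvec r i` only involves the `i`-th cutoff;
with `R` close to `1` and a suitable normalisation of the `τ j`, the support of that derivative
meets the face `x i = 0` of the orthant only where the factor has zero value, gradient and Hessian,
and on the face `x k = 0` the factor itself has zero value, gradient and Hessian
(`exists_coords`, `factor_dirFlat`, `factor_flat`). A `C¹` function vanishing with its gradient on a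
face is negligible with respect to the corresponding coordinate (`continuousOn_div_coord`), which
gives membership in the required domains.

As a function of `(γ, τ)` each factor is homogeneous of degree `p + 1 > 2` and of class `C²` off the
origin, hence of class `C²` everywhere with zero value, gradient and Hessian at the origin
(`homog_C2`).
-/

open MeasureTheory Set
open scoped NNReal ENNReal

noncomputable section

variable {S : Type*} [Fintype S] [DecidableEq S]

/-- The generator of the underlying Markov chain. -/
def gen (r : S → S → ℝ) (f : S → ℝ) (j : S) : ℝ := ∑ k, r j k * (f k - f j)

/-- Irreducibility of the jump rates. -/
def IrreducibleRates (r : S → S → ℝ) : Prop :=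
  ∀ j k : S, j ≠ k → Relation.TransGen (fun a c => 0 < r a c) j k

/-- canonical basis vector of ℝ^S -/
def ebasis (j : S) : S → ℝ := Pi.single j 1

/-- the vectors v_j = Σ_k r(j,k)(e_k - e_j) -/
def vvec (r : S → S → ℝ) (j : S) : S → ℝ := ∑ k, r j k • (ebasis k - ebasis j)

/-- second directional derivative (∂_d)² H (x) -/
def secondD (H : (S → ℝ) → ℝ) (d x : S → ℝ) : ℝ :=
  fderiv ℝ (fun y => fderiv ℝ H y d) x d

/-- membership in the class 𝓓_j -/
def memD (r : S → S → ℝ) (j : S) (H : (S → ℝ) → ℝ) : Prop :=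
  ContDiff ℝ 2 H ∧
  ContinuousOn (fun x => if 0 < x j then fderiv ℝ H x (vvec r j) / x j else 0)
    (stdSimplex ℝ S)

/-- the operator 𝔏 -/
def Lop (r : S → S → ℝ) (m : S → ℝ) (b : ℝ) (H : (S → ℝ) → ℝ) (x : S → ℝ) : ℝ :=
  b * ∑ j, (if x j ≠ 0 then (m j / x j) * fderiv ℝ H x (vvec r j) else 0)
    + (1 / 2) * ∑ j, ∑ k, m j * r j k * secondD H (ebasis k - ebasis j) x

/-- the path space C(ℝ₊, Σ) -/
abbrev PathSp (S : Type*) [Fintype S] := C(ℝ≥0, ↥(stdSimplex ℝ S))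

instance : MeasurableSpace (PathSp S) := borel _

/-- the natural filtration 𝓕_t = σ(X_s : s ≤ t) -/
def filtr (S : Type*) [Fintype S] (t : ℝ≥0) : MeasurableSpace (PathSp S) :=
  ⨆ s ∈ Set.Iic t,
    MeasurableSpace.comap (fun ω : PathSp S => ((ω s : S → ℝ))) inferInstance

/-- the martingale property with respect to the natural filtration -/
def IsMartingale (μ : Measure (PathSp S)) (M : ℝ≥0 → PathSp S → ℝ) : Prop :=
  (∀ t, Integrable (M t) μ) ∧
  (∀ t, @Measurable _ _ (filtr S t) _ (M t)) ∧
  (∀ s t : ℝ≥0, s ≤ t → ∀ A : Set (PathSp S), MeasurableSet[filtr S s] A →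
    ∫ ω in A, M t ω ∂μ = ∫ ω in A, M s ω ∂μ)

/-- the process H(X_t) - ∫₀ᵗ (𝔏H)(X_s) ds -/
def martProc (r : S → S → ℝ) (m : S → ℝ) (b : ℝ) (H : (S → ℝ) → ℝ)
    (t : ℝ≥0) (ω : PathSp S) : ℝ :=
  H (ω t : S → ℝ) - ∫ s in Set.Icc (0:ℝ) (t:ℝ), Lop r m b H ((ω s.toNNReal : S → ℝ))

/-- μ is a solution of the 𝔏-martingale problem -/
def SolvesMP (r : S → S → ℝ) (m : S → ℝ) (b : ℝ) (μ : Measure (PathSp S)) : Prop :=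
  ∀ H : (S → ℝ) → ℝ, (∀ j : S, memD r j H) → IsMartingale μ (martProc r m b H)

/-- μ starts at x -/
def StartsAt (μ : Measure (PathSp S)) (x : S → ℝ) : Prop :=
  μ {ω : PathSp S | (ω 0 : S → ℝ) = x} = 1
/-- u k is the 𝓛-harmonic extension of the indicator of k on B -/
def HarmonicExt (r : S → S → ℝ) (B : Finset S) (u : S → S → ℝ) : Prop :=
  ∀ k ∈ B, (∀ j ∈ B, u k j = if j = k then 1 else 0) ∧ (∀ j ∉ B, gen r (u k) j = 0)

/-- the trace jump rates r^B, expressed via the harmonic extensions u -/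
def traceR (r : S → S → ℝ) (u : S → S → ℝ) (j k : S) : ℝ :=
  if j = k then 0 else ∑ ℓ, r j ℓ * u k ℓ

/-- the vectors v_j^B in ℝ^B -/
def vvecB (rB : S → S → ℝ) (B : Finset S) (j : ↥B) : ↥B → ℝ :=
  ∑ k : ↥B, rB j.1 k.1 • ((Pi.single k 1 : ↥B → ℝ) - Pi.single j 1)

/-- the operator 𝔏_B acting on C²(Σ_B) -/
def LopB (rB : S → S → ℝ) (m : S → ℝ) (b : ℝ) (B : Finset S)
    (h : (↥B → ℝ) → ℝ) (x : ↥B → ℝ) : ℝ :=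
  b * ∑ j : ↥B, (if 0 < x j then (m j.1 / x j) * fderiv ℝ h x (vvecB rB B j) else 0)
    + (1 / 2) * ∑ j : ↥B, ∑ k : ↥B, m j.1 * rB j.1 k.1 *
        fderiv ℝ (fun y => fderiv ℝ h y ((Pi.single k 1 : ↥B → ℝ) - Pi.single j 1)) x
          ((Pi.single k 1 : ↥B → ℝ) - Pi.single j 1)

/-- extension of x ∈ ℝ^B by zero to ℝ^S -/
def inclB (B : Finset S) (x : ↥B → ℝ) : S → ℝ :=
  fun j => if h : j ∈ B then x ⟨j, h⟩ else 0

/-- restriction of the coordinates to B -/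
def restB (B : Finset S) (y : S → ℝ) : ↥B → ℝ := fun j => y j.1

open Classical in
/-- the function [F]_B -/
def FB (B : Finset S) (F : (S → ℝ) → ℝ) (x : ↥B → ℝ) : ℝ :=
  if ∀ j, 0 < x j then F (inclB B x) else 0



open Filter Topology

/-! ### Homogeneous functions -/

/-- A positively homogeneous function that is continuous off the origin is bounded by
`C ‖x‖ ^ q`, by compactness of the unit sphere. -/
lemma homog_bound {E F : Type*} [NormedAddCommGroup E] [NormedSpace ℝ E] [FiniteDimensional ℝ E]
    [NormedAddCommGroup F] [NormedSpace ℝ F] {q : ℝ} (hq : 0 < q) {f : E → F}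
    (hf0 : f 0 = 0) (hom : ∀ c : ℝ, 0 < c → ∀ x, f (c • x) = c ^ q • f x)
    (hc : ∀ x, x ≠ 0 → ContinuousAt f x) : ∃ C : ℝ, 0 ≤ C ∧ ∀ x, ‖f x‖ ≤ C * ‖x‖ ^ q := by
  have hs : IsCompact (Metric.sphere (0 : E) 1) := isCompact_sphere 0 1
  have hcont : ContinuousOn f (Metric.sphere (0 : E) 1) := by
    intro x hx
    refine (hc x ?_).continuousWithinAt
    rintro rfl
    simp at hx
  obtain ⟨C, hC⟩ := hs.exists_bound_of_continuousOn hcont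
  refine ⟨max C 0, le_max_right _ _, fun x => ?_⟩
  by_cases hx : x = 0
  · subst hx
    simp [hf0, Real.zero_rpow hq.ne']
  · have hn : 0 < ‖x‖ := norm_pos_iff.mpr hx
    have h1 : ‖x‖⁻¹ • x ∈ Metric.sphere (0 : E) 1 := by
      simp [norm_smul, hn.ne']
    have h2 : f x = ‖x‖ ^ q • f (‖x‖⁻¹ • x) := by
      rw [← hom _ hn, smul_smul, mul_inv_cancel₀ hn.ne', one_smul]
    rw [h2, norm_smul, Real.norm_of_nonneg (Real.rpow_nonneg hn.le _), mul_comm]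
    gcongr
    exact (hC _ h1).trans (le_max_left _ _)

/-- A function homogeneous of degree `q > 1` and of class `C¹` off the origin is of class `C¹`, and
its derivative is homogeneous of degree `q - 1`. -/
lemma homog_C1 {E F : Type*} [NormedAddCommGroup E] [NormedSpace ℝ E] [FiniteDimensional ℝ E]
    [NormedAddCommGroup F] [NormedSpace ℝ F] {q : ℝ} (hq : 1 < q) {f : E → F}
    (hf0 : f 0 = 0) (hom : ∀ c : ℝ, 0 < c → ∀ x, f (c • x) = c ^ q • f x)
    (hC : ∀ x, x ≠ 0 → ContDiffAt ℝ 1 f x) :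
    ContDiff ℝ 1 f ∧ fderiv ℝ f 0 = 0 ∧
      ∀ c : ℝ, 0 < c → ∀ x, fderiv ℝ f (c • x) = c ^ (q - 1) • fderiv ℝ f x := by
  obtain ⟨C, hC0, hCb⟩ := homog_bound (by linarith) hf0 hom (fun x hx => (hC x hx).continuousAt)
  have hd0 : HasFDerivAt f (0 : E →L[ℝ] F) 0 := by
    rw [hasFDerivAt_iff_tendsto]
    have hlim : Tendsto (fun x : E => C * ‖x‖ ^ (q - 1)) (𝓝 0) (𝓝 0) := by
      have : Continuous (fun x : E => C * ‖x‖ ^ (q - 1)) :=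
        continuous_const.mul (continuous_norm.rpow_const (fun _ => Or.inr (by linarith)))
      have h := this.tendsto 0
      simpa [Real.zero_rpow (by linarith : q - 1 ≠ 0)] using h
    refine squeeze_zero (fun x => by positivity) (fun x => ?_) hlim
    by_cases hx : x = 0
    · subst hx
      simp [Real.zero_rpow (by linarith : q - 1 ≠ 0)]
    · have hn : 0 < ‖x‖ := norm_pos_iff.mpr hx
      have h := hCb x
      simp only [hf0, sub_zero, zero_apply]
      rw [Real.rpow_sub_one hn.ne', inv_mul_le_iff₀ hn]
      calc ‖f x‖ ≤ C * ‖x‖ ^ q := h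
        _ = ‖x‖ * (C * (‖x‖ ^ q / ‖x‖)) := by field_simp
  have hdiff : Differentiable ℝ f := by
    intro x
    by_cases hx : x = 0
    · subst hx; exact hd0.differentiableAt
    · exact (hC x hx).differentiableAt one_ne_zero
  have hhom : ∀ c : ℝ, 0 < c → ∀ x, fderiv ℝ f (c • x) = c ^ (q - 1) • fderiv ℝ f x := by
    intro c hc x
    have h1 : fderiv ℝ (fun y => f (c • y)) x = c • fderiv ℝ f (c • x) := by
      exact fderiv_comp_smul c
    have h2 : (fun y => f (c • y)) = fun y => c ^ q • f y := funext fun y => hom c hc y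
    rw [h2, fderiv_fun_const_smul (hdiff x)] at h1
    rw [Real.rpow_sub_one hc.ne', div_eq_inv_mul, mul_smul, h1, smul_smul, inv_mul_cancel₀ hc.ne',
      one_smul]
  refine ⟨?_, hd0.fderiv, hhom⟩
  rw [contDiff_one_iff_fderiv]
  refine ⟨hdiff, continuous_iff_continuousAt.mpr fun x => ?_⟩
  have hcne : ∀ x, x ≠ 0 → ContinuousAt (fderiv ℝ f) x := fun x hx =>
    ((hC x hx).fderiv_right (m := 0) (by norm_num)).continuousAt
  by_cases hx : x = 0
  · subst hx
    obtain ⟨C', -, hC'⟩ := homog_bound (by linarith) hd0.fderiv hhom hcne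
    rw [ContinuousAt, hd0.fderiv, tendsto_zero_iff_norm_tendsto_zero]
    have hlim : Tendsto (fun x : E => C' * ‖x‖ ^ (q - 1)) (𝓝 0) (𝓝 0) := by
      have : Continuous (fun x : E => C' * ‖x‖ ^ (q - 1)) :=
        continuous_const.mul (continuous_norm.rpow_const (fun _ => Or.inr (by linarith)))
      have h := this.tendsto 0
      simpa [Real.zero_rpow (by linarith : q - 1 ≠ 0)] using h
    exact squeeze_zero (fun x => norm_nonneg _) hC' hlim
  · exact hcne x hx

/-- The value, the first and the second derivative of `f` at `x` all vanish. -/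
def Flat {E : Type*} [NormedAddCommGroup E] [NormedSpace ℝ E] (f : E → ℝ) (x : E) : Prop :=
  f x = 0 ∧ fderiv ℝ f x = 0 ∧ fderiv ℝ (fderiv ℝ f) x = 0

/-- Homogeneity of degree `q > 2` makes the origin a harmless singularity for class `C²`. -/
lemma homog_C2 {E : Type*} [NormedAddCommGroup E] [NormedSpace ℝ E] [FiniteDimensional ℝ E]
    {q : ℝ} (hq : 2 < q) {f : E → ℝ}
    (hf0 : f 0 = 0) (hom : ∀ c : ℝ, 0 < c → ∀ x, f (c • x) = c ^ q • f x)
    (hC : ∀ x, x ≠ 0 → ContDiffAt ℝ 2 f x) :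
    ContDiff ℝ 2 f ∧ Flat f 0 := by
  obtain ⟨h1, h2, h3⟩ := homog_C1 (by linarith) hf0 hom
    (fun x hx => (hC x hx).of_le (by norm_num))
  obtain ⟨h4, h5, -⟩ := homog_C1 (by linarith) h2 h3
    (fun x hx => (hC x hx).fderiv_right (m := 1) (by norm_num))
  refine ⟨?_, hf0, h2, h5⟩
  have : (2 : WithTop ℕ∞) = 1 + 1 := by norm_num
  rw [this, contDiff_succ_iff_fderiv]
  exact ⟨h1.differentiable one_ne_zero, by simp, h4⟩

/-! ### Flatness and products -/

lemma Flat.of_eventuallyEq {E : Type*} [NormedAddCommGroup E] [NormedSpace ℝ E] {f : E → ℝ} {x : E}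
    (h : f =ᶠ[𝓝 x] fun _ => 0) : Flat f x := by
  refine ⟨h.eq_of_nhds, ?_, ?_⟩
  · rw [h.fderiv_eq]; simp
  · have h2 : fderiv ℝ f =ᶠ[𝓝 x] fun _ => 0 := by
      have := h.fderiv (𝕜 := ℝ)
      refine this.trans (Eventually.of_forall fun y => by simp)
    rw [h2.fderiv_eq]; simp

lemma Flat.mul {E : Type*} [NormedAddCommGroup E] [NormedSpace ℝ E] {f g : E → ℝ} {x : E}
    (hf : ContDiff ℝ 2 f) (hg : ContDiff ℝ 2 g) (h : Flat f x) : Flat (fun y => f y * g y) x := by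
  have df := hf.differentiable two_ne_zero
  have dg := hg.differentiable two_ne_zero
  have ddf := (hf.fderiv_right (m := 1) (by norm_num)).differentiable one_ne_zero
  have ddg := (hg.fderiv_right (m := 1) (by norm_num)).differentiable one_ne_zero
  have e : fderiv ℝ (fun y => f y * g y) = fun y => f y • fderiv ℝ g y + g y • fderiv ℝ f y :=
    funext fun y => fderiv_fun_mul (df y) (dg y)
  obtain ⟨h0, h1, h2⟩ := h
  refine ⟨by simp [h0], by simp [e, h0, h1], ?_⟩
  rw [e, fderiv_fun_add ((df x).fun_smul (ddg x)) ((dg x).fun_smul (ddf x)),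
    fderiv_fun_smul (df x) (ddg x), fderiv_fun_smul (dg x) (ddf x)]
  ext v w
  simp [h0, h1, h2]

lemma Flat.comp {E E' : Type*} [NormedAddCommGroup E] [NormedSpace ℝ E] [NormedAddCommGroup E']
    [NormedSpace ℝ E'] {f : E → ℝ} (hf : ContDiff ℝ 2 f) (L : E' →L[ℝ] E) {x : E'}
    (h : Flat f (L x)) : Flat (fun y => f (L y)) x := by
  have df := hf.differentiable two_ne_zero
  have ddf := (hf.fderiv_right (m := 1) (by norm_num)).differentiable one_ne_zero
  have e : fderiv ℝ (fun y => f (L y)) = fun y => (fderiv ℝ f (L y)).comp L := funext fun y => by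
    have := fderiv_comp y (df (L y)) L.differentiableAt
    rw [L.fderiv] at this
    exact this
  obtain ⟨h0, h1, h2⟩ := h
  refine ⟨h0, by simp [e, h1], ?_⟩
  have hc : HasFDerivAt (fun y => fderiv ℝ f (L y)) ((fderiv ℝ (fderiv ℝ f) (L x)).comp L) x :=
    (ddf (L x)).hasFDerivAt.comp x L.hasFDerivAt
  have hc2 := hc.clm_comp (hasFDerivAt_const L x)
  rw [e, hc2.fderiv]
  ext v w
  simp [h2]

/-- The directional derivative of `f` along `v` vanishes at `x` together with its own derivative. -/
def DirFlat {E : Type*} [NormedAddCommGroup E] [NormedSpace ℝ E] (f : E → ℝ) (v x : E) : Prop :=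
  fderiv ℝ f x v = 0 ∧ fderiv ℝ (fun y => fderiv ℝ f y v) x = 0

lemma fderiv_fderiv_apply {E : Type*} [NormedAddCommGroup E] [NormedSpace ℝ E] {f : E → ℝ} {x : E}
    (hf : ContDiffAt ℝ 2 f x) (v w : E) :
    fderiv ℝ (fun y => fderiv ℝ f y v) x w = fderiv ℝ (fderiv ℝ f) x w v := by
  have ddf := (hf.fderiv_right (m := 1) (by norm_num)).differentiableAt one_ne_zero
  rw [fderiv_clm_apply ddf (differentiableAt_const v)]
  simp

lemma Flat.dirFlat {E : Type*} [NormedAddCommGroup E] [NormedSpace ℝ E] {f : E → ℝ} {x : E}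
    (hf : ContDiff ℝ 2 f) (h : Flat f x) (v : E) : DirFlat f v x := by
  refine ⟨by simp [h.2.1], ?_⟩
  ext w
  rw [fderiv_fderiv_apply hf.contDiffAt, h.2.2]
  simp

lemma DirFlat.mul {E : Type*} [NormedAddCommGroup E] [NormedSpace ℝ E] {f g : E → ℝ} {v x : E}
    (hf : ContDiff ℝ 2 f) (hg : ContDiff ℝ 2 g) (h : DirFlat f v x) (h' : DirFlat g v x) :
    DirFlat (fun y => f y * g y) v x := by
  have df := hf.differentiable two_ne_zero
  have dg := hg.differentiable two_ne_zero
  have ddf : Differentiable ℝ (fun y => fderiv ℝ f y v) :=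
    ((hf.fderiv_right (m := 1) (by norm_num)).clm_apply contDiff_const).differentiable one_ne_zero
  have ddg : Differentiable ℝ (fun y => fderiv ℝ g y v) :=
    ((hg.fderiv_right (m := 1) (by norm_num)).clm_apply contDiff_const).differentiable one_ne_zero
  have e : (fun y => fderiv ℝ (fun y => f y * g y) y v) =
      fun y => f y * fderiv ℝ g y v + g y * fderiv ℝ f y v :=
    funext fun y => by rw [fderiv_fun_mul (df y) (dg y)]; simp
  refine ⟨(congrFun e x).trans (by simp [h.1, h'.1]), ?_⟩
  rw [e, fderiv_fun_add ((df x).fun_mul (ddg x)) ((dg x).fun_mul (ddf x)),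
    fderiv_fun_mul (df x) (ddg x), fderiv_fun_mul (dg x) (ddf x)]
  simp [h.1, h'.1, h.2, h'.2]

lemma DirFlat.prod {E ι : Type*} [NormedAddCommGroup E] [NormedSpace ℝ E] {f : ι → E → ℝ} {v x : E}
    (s : Finset ι) (hf : ∀ k ∈ s, ContDiff ℝ 2 (f k)) (h : ∀ k ∈ s, DirFlat (f k) v x) :
    DirFlat (fun y => ∏ k ∈ s, f k y) v x := by
  classical
  induction s using Finset.induction_on with
  | empty => simp [DirFlat]
  | insert a s ha ih =>
    simp only [Finset.prod_insert ha]
    simp only [Finset.forall_mem_insert] at hf h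
    exact DirFlat.mul hf.1 (contDiff_prod hf.2) h.1 (ih hf.2 h.2)

lemma Flat.prod {E ι : Type*} [NormedAddCommGroup E] [NormedSpace ℝ E] {f : ι → E → ℝ} {x : E}
    (s : Finset ι) (hf : ∀ k ∈ s, ContDiff ℝ 2 (f k)) {k : ι} (hk : k ∈ s) (h : Flat (f k) x) :
    Flat (fun y => ∏ k ∈ s, f k y) x := by
  classical
  simp only [← Finset.mul_prod_erase s _ hk]
  exact Flat.mul (hf k hk) (contDiff_prod fun j hj => hf j (Finset.mem_of_mem_erase hj)) h

lemma DirFlat.of_const {E : Type*} [NormedAddCommGroup E] [NormedSpace ℝ E] {f : E → ℝ} {v x : E}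
    (hf : ContDiff ℝ 2 f) (h : ∀ᶠ y in 𝓝 x, ∀ᶠ s : ℝ in 𝓝 0, f (y + s • v) = f y) :
    DirFlat f v x := by
  have h1 : (fun y => fderiv ℝ f y v) =ᶠ[𝓝 x] fun _ => 0 := by
    filter_upwards [h] with y hy
    rw [← (hf.differentiable two_ne_zero y).lineDeriv_eq_fderiv, lineDeriv,
      EventuallyEq.deriv_eq (f := fun _ => f y) hy]
    simp
  exact ⟨h1.eq_of_nhds, by rw [h1.fderiv_eq]; simp⟩

/-! ### The cutoff profile -/

/-- The profile `γ ^ q ∏ⱼ χ (τⱼ / γ)` for `γ > 0`, extended by zero to `γ ≤ 0`; the argument is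
`(γ, τ)`. -/
def theta (S : Type) [Fintype S] (χ : ℝ → ℝ) (q : ℝ) (z : ℝ × (S → ℝ)) : ℝ :=
  if 0 < z.1 then z.1 ^ q * ∏ j, χ (z.2 j / z.1) else 0

section theta
variable {T : Type} [Fintype T]

lemma theta_eventually_zero {χ : ℝ → ℝ} {q R : ℝ} (hχ : ∀ s, R ≤ |s| → χ s = 0)
    {z : ℝ × (T → ℝ)} (h : z.1 < 0 ∨ ∃ j, R * z.1 < |z.2 j|) :
    theta T χ q =ᶠ[𝓝 z] fun _ => 0 := by
  rcases h with h | ⟨j, hj⟩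
  · have : ∀ᶠ y : ℝ × (T → ℝ) in 𝓝 z, y.1 < 0 :=
      (isOpen_lt continuous_fst continuous_const).mem_nhds h
    filter_upwards [this] with y hy
    simp [theta, hy.le]
  · have : ∀ᶠ y : ℝ × (T → ℝ) in 𝓝 z, R * y.1 < |y.2 j| :=
      (isOpen_lt (by fun_prop) (by fun_prop)).mem_nhds hj
    filter_upwards [this] with y hy
    unfold theta
    split_ifs with h0
    · rw [Finset.prod_eq_zero (Finset.mem_univ j), mul_zero]
      apply hχ
      rw [abs_div, abs_of_pos h0, le_div_iff₀ h0]
      exact hy.le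
    · rfl

lemma theta_C2 {χ : ℝ → ℝ} {q R : ℝ} (hq : 2 < q) (hχC : ContDiff ℝ 2 χ)
    (hχ : ∀ s, R ≤ |s| → χ s = 0) : ContDiff ℝ 2 (theta T χ q) ∧ Flat (theta T χ q) 0 := by
  refine homog_C2 hq (by simp [theta]) ?_ ?_
  · intro c hc z
    by_cases h : 0 < z.1
    · have h' : 0 < c * z.1 := mul_pos hc h
      simp only [theta, Prod.smul_fst, Prod.smul_snd, smul_eq_mul, Pi.smul_apply, h, h', if_true,
        Real.mul_rpow hc.le h.le, mul_div_mul_left _ _ hc.ne', mul_assoc]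
    · have h' : ¬ 0 < c * z.1 := fun h' => h (pos_of_mul_pos_right h' hc.le)
      simp [theta, h, h']
  · intro z hz
    rcases lt_trichotomy z.1 0 with h | h | h
    · exact contDiffAt_const.congr_of_eventuallyEq (theta_eventually_zero hχ (Or.inl h))
    · have : ∃ j, z.2 j ≠ 0 := by
        by_contra! hc
        exact hz (Prod.ext h (funext hc))
      obtain ⟨j, hj⟩ := this
      refine contDiffAt_const.congr_of_eventuallyEq (theta_eventually_zero hχ (Or.inr ⟨j, ?_⟩))
      simpa [h] using hj
    · have : ∀ᶠ y : ℝ × (T → ℝ) in 𝓝 z, 0 < y.1 :=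
        (isOpen_lt continuous_const continuous_fst).mem_nhds h
      have e : theta T χ q =ᶠ[𝓝 z] fun y => y.1 ^ q * ∏ j, χ (y.2 j / y.1) := by
        filter_upwards [this] with y hy
        simp [theta, hy]
      refine ContDiffAt.congr_of_eventuallyEq ?_ e
      refine (contDiffAt_fst.rpow_const_of_ne h.ne').mul (contDiffAt_prod fun j _ => ?_)
      refine hχC.contDiffAt.comp z (ContDiffAt.div ?_ contDiffAt_fst h.ne')
      exact contDiffAt_pi.mp contDiffAt_snd j

end theta

/-! ### Linear coordinates -/

section lin
variable {T : Type} [Fintype T]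

/-- The linear form on `ℝ^T` with coefficients `h`. -/
def lin (h : T → ℝ) : (T → ℝ) →L[ℝ] ℝ := ∑ j, h j • ContinuousLinearMap.proj j

lemma lin_apply (h x : T → ℝ) : lin h x = ∑ j, h j * x j := by simp [lin]

variable [DecidableEq T]

lemma lin_ebasis (h : T → ℝ) (j : T) : lin h (ebasis j) = h j := by
  simp [lin_apply, ebasis, Pi.single_apply]

lemma lin_vvec (r : T → T → ℝ) (h : T → ℝ) (j : T) : lin h (vvec r j) = gen r h j := by
  simp [vvec, gen, map_sum, lin_ebasis]

/-! ### The killed Markov chain -/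

lemma exists_exit {U : Type} {r : U → U → ℝ} (hirr : IrreducibleRates r) {P : U → Prop} {j k : U}
    (hj : P j) (hk : ¬ P k) : ∃ a c, P a ∧ ¬ P c ∧ 0 < r a c := by
  have hjk : j ≠ k := by rintro rfl; exact hk hj
  have h := hirr j k hjk
  clear hjk
  induction h with
  | single h => exact ⟨j, _, hj, hk, h⟩
  | @tail a c h1 h2 ih =>
    by_cases ha : P a
    · exact ⟨a, c, ha, hk, h2⟩
    · exact ih ha

/-- Minimum principle for functions superharmonic off `B`. -/
lemma min_principle {U : Type} [Fintype U] {r : U → U → ℝ} (hr : ∀ j k, 0 ≤ r j k) (hirr : IrreducibleRates r)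
    {B : Finset U} (hB : B.Nonempty) {h : U → ℝ} (h0 : ∀ j ∈ B, 0 ≤ h j)
    (h1 : ∀ j ∉ B, gen r h j ≤ 0) : ∀ j, 0 ≤ h j := by
  obtain ⟨k, hk⟩ := hB
  have : Nonempty U := ⟨k⟩
  obtain ⟨i, hi⟩ := Finite.exists_min h
  by_contra! hc
  obtain ⟨j, hj⟩ := hc
  have hin : h i < 0 := (hi j).trans_lt hj
  obtain ⟨a, c, ha, hcn, hac⟩ := exists_exit hirr (P := fun l => h l = h i) (j := i) (k := k) rfl
    (fun e => by have := h0 k hk; linarith)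
  have haB : a ∉ B := fun hb => by have := h0 a hb; linarith
  have hge := h1 a haB
  have hpos : 0 < gen r h a := by
    refine Finset.sum_pos' (fun l _ => mul_nonneg (hr _ _) ?_) ⟨c, Finset.mem_univ c, mul_pos hac ?_⟩
    · rw [ha]; linarith [hi l]
    · rw [ha]; linarith [lt_of_le_of_ne (hi c) (Ne.symm hcn)]
  linarith

lemma gen_add (r : T → T → ℝ) (f g : T → ℝ) (j : T) :
    gen r (f + g) j = gen r f j + gen r g j := by
  simp only [← lin_vvec, lin_apply, Pi.add_apply, add_mul, Finset.sum_add_distrib]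

lemma gen_smul (r : T → T → ℝ) (c : ℝ) (f : T → ℝ) (j : T) :
    gen r (c • f) j = c * gen r f j := by
  simp only [← lin_vvec, lin_apply, Pi.smul_apply, smul_eq_mul, mul_assoc, Finset.mul_sum]

lemma gen_sum {ι : Type*} (r : T → T → ℝ) (s : Finset ι) (f : ι → T → ℝ) (j : T) :
    gen r (fun l => ∑ a ∈ s, f a l) j = ∑ a ∈ s, gen r (f a) j := by
  simp only [← lin_vvec, lin_apply, Finset.sum_mul]
  exact Finset.sum_comm

/-- Uniqueness for the Dirichlet problem. -/
lemma dirichlet_unique {r : T → T → ℝ} (hr : ∀ j k, 0 ≤ r j k) (hirr : IrreducibleRates r)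
    {B : Finset T} (hB : B.Nonempty) {h : T → ℝ} (h0 : ∀ j ∈ B, h j = 0)
    (h1 : ∀ j ∉ B, gen r h j = 0) : h = 0 := by
  have a := min_principle hr hirr hB (h := h) (fun j hj => (h0 j hj).ge) (fun j hj => (h1 j hj).le)
  have c := min_principle hr hirr hB (h := (-1 : ℝ) • h) (fun j hj => by simp [h0 j hj])
    (fun j hj => by rw [gen_smul, h1 j hj, mul_zero])
  funext j
  have := c j
  simp at this
  exact le_antisymm this (a j)

/-- Existence for the Poisson problem with zero boundary values, from uniqueness. -/
lemma poisson_exists {r : T → T → ℝ} (hr : ∀ j k, 0 ≤ r j k) (hirr : IrreducibleRates r)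
    {B : Finset T} (hB : B.Nonempty) (φ : T → ℝ) :
    ∃ h : T → ℝ, (∀ j ∈ B, h j = 0) ∧ (∀ j ∉ B, gen r h j = φ j) := by
  let M : (T → ℝ) →ₗ[ℝ] (T → ℝ) :=
    { toFun := fun h j => if j ∈ B then h j else gen r h j
      map_add' := fun f g => by
        funext j
        by_cases hj : j ∈ B <;> simp [hj, gen_add]
      map_smul' := fun c f => by
        funext j
        by_cases hj : j ∈ B <;> simp [hj, gen_smul] }
  have hinj : Function.Injective M := by
    rw [← LinearMap.ker_eq_bot, LinearMap.ker_eq_bot']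
    intro h hh
    refine dirichlet_unique hr hirr hB (fun j hj => ?_) (fun j hj => ?_)
    · simpa [M, hj] using congrFun hh j
    · simpa [M, hj] using congrFun hh j
  obtain ⟨h, hh⟩ := (LinearMap.injective_iff_surjective.mp hinj) (fun j => if j ∈ B then 0 else φ j)
  refine ⟨h, fun j hj => ?_, fun j hj => ?_⟩
  · simpa [M, hj] using congrFun hh j
  · simpa [M, hj] using congrFun hh j

lemma sum_harmonic {r : T → T → ℝ} (hr : ∀ j k, 0 ≤ r j k) (hirr : IrreducibleRates r)
    {B : Finset T} (hB : B.Nonempty) {u : T → T → ℝ} (hu : HarmonicExt r B u) (l : T) :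
    ∑ k ∈ B, u k l = 1 := by
  have h : (fun l => ∑ k ∈ B, u k l) + (fun _ => (-1 : ℝ)) = 0 := by
    refine dirichlet_unique hr hirr hB (fun j hj => ?_) (fun j hj => ?_)
    · simp only [Pi.add_apply]
      rw [Finset.sum_congr rfl (fun k hk => (hu k hk).1 j hj)]
      simp [hj]
    · rw [gen_add, gen_sum, Finset.sum_congr rfl (fun k hk => (hu k hk).2 j hj)]
      simp [gen]
  have := congrFun h l
  simp at this
  linarith

/-- The Green functions `g j` of the chain killed on `B`. The last two clauses say that the Green
matrix is a right and a left inverse of minus the generator restricted to the complement of `B`;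
the first of them makes the forms `lin (g j)` dual, up to sign, to the vectors `vvec r i`. -/
lemma exists_green {r : T → T → ℝ} (hr : ∀ j k, 0 ≤ r j k) (hrd : ∀ j, r j j = 0)
    (hirr : IrreducibleRates r) {B : Finset T} (hB : B.Nonempty) :
    ∃ g : T → T → ℝ, (∀ j l, 0 ≤ g j l) ∧ (∀ j ∈ B, g j = 0) ∧ (∀ j, ∀ l ∈ B, g j l = 0) ∧
      (∀ j ∉ B, ∀ i ∉ B, gen r (g j) i = if i = j then -1 else 0) ∧
      (∀ i ∉ B, ∀ l, (∑ k, r i k) * g i l - ∑ n, r n i * g n l = if l = i then 1 else 0) := by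
  choose g0 h1 h2 using fun j => poisson_exists hr hirr hB (fun i => if i = j then (-1 : ℝ) else 0)
  let g : T → T → ℝ := fun j => if j ∈ B then 0 else g0 j
  have gB : ∀ j ∈ B, g j = 0 := fun j hj => by simp [g, hj]
  have gB' : ∀ j, ∀ l ∈ B, g j l = 0 := fun j l hl => by
    by_cases hj : j ∈ B <;> simp [g, hj, h1 j l hl]
  have gA : ∀ j ∉ B, ∀ i ∉ B, gen r (g j) i = if i = j then -1 else 0 := fun j hj i hi => by
    simp [g, hj, h2 j i hi]
  refine ⟨g, fun j => ?_, gB, gB', gA, fun i hi => ?_⟩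
  · by_cases hj : j ∈ B
    · simp [gB j hj]
    · refine min_principle hr hirr hB (fun l hl => (gB' j l hl).ge) (fun l hl => ?_)
      rw [gA j hj l hl]; split_ifs <;> norm_num
  · -- the difference of both sides vanishes on `B` and is harmonic off `B`
    have key : ((∑ k, r i k) • g i + (-1 : ℝ) • (fun l => ∑ n, (r n i • g n) l)) +
        (-1 : ℝ) • (fun l => if l = i then (1 : ℝ) else 0) = 0 := by
      refine dirichlet_unique hr hirr hB (fun j hj => ?_) (fun j hj => ?_)
      · have : j ≠ i := by rintro rfl; exact hi hj
        simp [gB' _ j hj, this]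
      · rw [gen_add, gen_add, gen_smul, gen_smul, gen_smul, gen_sum, gA i hi j hj]
        have e1 : ∑ n, gen r (r n i • g n) j = - r j i := by
          rw [Finset.sum_eq_single j]
          · rw [gen_smul, gA j hj j hj]; simp
          · intro n _ hn
            rw [gen_smul]
            by_cases hnB : n ∈ B
            · rw [gB n hnB]; simp [gen]
            · rw [gA n hnB j hj]; simp [hn.symm]
          · simp
        rw [e1]
        by_cases hji : j = i
        · subst hji
          have e2 : gen r (fun l => if l = j then (1 : ℝ) else 0) j = - ∑ k, r j k := by
            rw [gen, ← Finset.sum_neg_distrib]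
            refine Finset.sum_congr rfl fun k _ => ?_
            by_cases hk : k = j
            · subst hk; simp [hrd]
            · simp [hk]
          rw [e2]; simp [hrd]
        · have e2 : gen r (fun l => if l = i then (1 : ℝ) else 0) j = r j i := by
            simp [gen, hji]
          rw [e2]; simp [hji]
    intro l
    have := congrFun key l
    simp only [Pi.add_apply, Pi.smul_apply, smul_eq_mul, Pi.zero_apply] at this
    linarith

/-- The rescaled Green functions `w j = g j / (κ * a j)`, with `a j = ∑ l, g j l`, and a cutoff
ratio `R > 1`. Since `x i = lam i * lin (g i) x - ∑ n, r n i * lin (g n) x` for `i ∉ B`, and the same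
combination of the `a n` equals `1`, taking `R` close to `1` gives the fourth clause: on the face
`x i = 0`, either some coordinate `lin (w j) x` exceeds `R * γ` or the `i`-th one stays below `γ`.
Taking `κ` small gives the last clause: on the face `x k = 0`, `k ∈ B`, some coordinate exceeds
`R * lin (u k) x`. For `j ∈ B` one has `g j = 0` and `a j = 0`, so that `w j = 0`. -/
lemma exists_coords {r : T → T → ℝ} (hr : ∀ j k, 0 ≤ r j k) (hrd : ∀ j, r j j = 0)
    (hirr : IrreducibleRates r) {B : Finset T} (hB : B.Nonempty) {u : T → T → ℝ}
    (hu : HarmonicExt r B u) :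
    ∃ (R : ℝ) (w : T → T → ℝ), 1 < R ∧
      (∀ i ∉ B, ∀ j, j ≠ i → gen r (w j) i = 0) ∧
      (∀ j, ∀ l ∈ B, w j l = 0) ∧
      (∀ i ∉ B, ∀ x : T → ℝ, (∀ l, 0 ≤ x l) → x i = 0 → ∀ γ : ℝ, 0 < γ →
        (∀ j, |lin (w j) x| ≤ R * γ) → |lin (w i) x| < γ) ∧
      (∀ k ∈ B, ∀ x : T → ℝ, (∀ l, 0 ≤ x l) → x k = 0 → 0 < lin (u k) x →
        ∃ j, R * lin (u k) x < |lin (w j) x|) := by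
  obtain ⟨g, g0, gB, gB', gA, gR⟩ := exists_green hr hrd hirr hB
  set lam : T → ℝ := fun i => ∑ k, r i k with hlam
  have lam0 : ∀ i, 0 ≤ lam i := fun i => Finset.sum_nonneg fun k _ => hr i k
  set a : T → ℝ := fun j => ∑ l, g j l with ha
  have a0 : ∀ j, 0 ≤ a j := fun j => Finset.sum_nonneg fun l _ => g0 j l
  -- the Green relation tested against an arbitrary vector
  have gx : ∀ i ∉ B, ∀ x : T → ℝ,
      lam i * lin (g i) x - ∑ n, r n i * lin (g n) x = x i := by
    intro i hi x
    have : ∀ l, (lam i * g i l - ∑ n, r n i * g n l) * x l = (if l = i then 1 else 0) * x l :=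
      fun l => by rw [gR i hi l]
    have h2 := Finset.sum_congr (rfl : (Finset.univ : Finset T) = Finset.univ) fun l _ => this l
    simp only [ite_mul, one_mul, zero_mul, Finset.sum_ite_eq', Finset.mem_univ, if_true] at h2
    rw [← h2]
    simp only [lin_apply, sub_mul, Finset.sum_sub_distrib, Finset.mul_sum, Finset.sum_mul, mul_assoc]
    congr 1
    exact Finset.sum_comm
  have ga : ∀ i ∉ B, lam i * a i - ∑ n, r n i * a n = 1 := by
    intro i hi
    have := gx i hi (fun _ => 1)
    simpa [lin_apply] using this
  have gnn : ∀ j (x : T → ℝ), (∀ l, 0 ≤ x l) → 0 ≤ lin (g j) x := fun j x hx => by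
    rw [lin_apply]; exact Finset.sum_nonneg fun l _ => mul_nonneg (g0 j l) (hx l)
  have rs : ∀ i, ∀ z : T → ℝ, (∀ n, 0 ≤ z n) → 0 ≤ ∑ n, r n i * z n := fun i z hz =>
    Finset.sum_nonneg fun n _ => mul_nonneg (hr n i) (hz n)
  have la1 : ∀ i ∉ B, 1 ≤ lam i * a i := fun i hi => by
    have := ga i hi; have := rs i a a0; linarith
  have apos : ∀ i ∉ B, 0 < a i := fun i hi =>
    lt_of_le_of_ne (a0 i) fun h => by have := la1 i hi; rw [← h] at this; simp at this; linarith
  have lpos : ∀ i ∉ B, 0 < lam i := fun i hi =>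
    lt_of_le_of_ne (lam0 i) fun h => by have := la1 i hi; rw [← h] at this; simp at this; linarith
  set N : ℝ := 1 + ∑ i, lam i * a i with hN
  have hN1 : 1 ≤ N := by
    have : 0 ≤ ∑ i, lam i * a i := Finset.sum_nonneg fun i _ => mul_nonneg (lam0 i) (a0 i)
    linarith
  have hNi : ∀ i, lam i * a i < N := fun i => by
    have := Finset.single_le_sum (f := fun i => lam i * a i)
      (fun i _ => mul_nonneg (lam0 i) (a0 i)) (Finset.mem_univ i)
    linarith
  set C : ℝ := 1 + ∑ k, ∑ l, |u k l| with hC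
  have hC1 : 1 ≤ C := by
    have : 0 ≤ ∑ k, ∑ l, |u k l| := by positivity
    linarith
  have hCu : ∀ k l, u k l ≤ C := fun k l => by
    have h1 := Finset.single_le_sum (f := fun l => |u k l|) (fun l _ => abs_nonneg _)
      (Finset.mem_univ l)
    have h2 := Finset.single_le_sum (f := fun k => ∑ l, |u k l|)
      (fun k _ => by positivity) (Finset.mem_univ k)
    linarith [le_abs_self (u k l)]
  set R : ℝ := 1 + 1 / N with hR
  have hR1 : 1 < R := by
    have : 0 < 1 / N := by positivity
    linarith
  have hR2 : R ≤ 2 := by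
    have : 1 / N ≤ 1 := by rw [div_le_one (by linarith)]; exact hN1
    linarith
  set κ : ℝ := 1 / (2 * (C * N)) with hκ
  have hκ0 : 0 < κ := by positivity
  have wl : ∀ j x, lin ((κ * a j)⁻¹ • g j) x = (κ * a j)⁻¹ * lin (g j) x := fun j x => by
    simp [lin_apply, Finset.mul_sum, mul_assoc]
  -- a bound on the rescaled coordinate is a bound on the Green coordinate
  have bnd : ∀ (x : T → ℝ) (j : T) (ρ : ℝ), |lin ((κ * a j)⁻¹ • g j) x| ≤ ρ →
      lin (g j) x ≤ ρ * (κ * a j) := by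
    intro x j ρ h
    by_cases hj : j ∈ B
    · have : a j = 0 := by simp [ha, gB j hj]
      simp [gB j hj, this, lin_apply]
    · have hp : 0 < κ * a j := mul_pos hκ0 (apos j hj)
      rw [wl] at h
      have := (le_abs_self _).trans h
      rwa [inv_mul_le_iff₀ hp, mul_comm] at this
  refine ⟨R, fun j => (κ * a j)⁻¹ • g j, hR1, fun i hi j hji => ?_, fun j l hl => ?_, ?_, ?_⟩
  · rw [gen_smul]
    by_cases hj : j ∈ B
    · rw [gB j hj]; simp [gen]
    · rw [gA j hj i hi]; simp [hji.symm]
  · simp [gB' j l hl]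
  · intro i hi x hx hxi γ hγ hj
    have hp : 0 < κ * a i := mul_pos hκ0 (apos i hi)
    have h1 := gx i hi x
    rw [hxi] at h1
    have h2 : ∑ n, r n i * lin (g n) x ≤ ∑ n, r n i * ((R * γ) * (κ * a n)) :=
      Finset.sum_le_sum fun n _ => mul_le_mul_of_nonneg_left (bnd x n _ (hj n)) (hr n i)
    have h3 : ∑ n, r n i * ((R * γ) * (κ * a n)) = R * γ * κ * ∑ n, r n i * a n := by
      rw [Finset.mul_sum]; exact Finset.sum_congr rfl fun n _ => by ring
    have h4 := ga i hi
    have h5 : R * (lam i * a i - 1) < lam i * a i := by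
      have h6 : (1 / N) * (lam i * a i) < 1 := by
        rw [one_div, inv_mul_lt_iff₀ (by linarith)]; linarith [hNi i]
      have : 0 < 1 / N := by positivity
      rw [hR]; nlinarith
    have h7 : lam i * lin (g i) x < lam i * (γ * (κ * a i)) := by
      calc lam i * lin (g i) x ≤ R * γ * κ * ∑ n, r n i * a n := by linarith
        _ = (γ * κ) * (R * (lam i * a i - 1)) := by
          have : ∑ n, r n i * a n = lam i * a i - 1 := by linarith
          rw [this]; ring
        _ < (γ * κ) * (lam i * a i) := mul_lt_mul_of_pos_left h5 (mul_pos hγ hκ0)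
        _ = _ := by ring
    have h8 := lt_of_mul_lt_mul_left h7 (lam0 i)
    rw [wl, abs_of_nonneg (mul_nonneg (inv_nonneg.mpr hp.le) (gnn i x hx)), inv_mul_lt_iff₀ hp]
    linarith
  · intro k hk x hx hxk hγ
    by_contra! hc
    have hxl : ∀ l, u k l * x l ≤ C * ((R * lin (u k) x * κ) * (lam l * a l)) := by
      intro l
      by_cases hl : l ∈ B
      · rw [(hu k hk).1 l hl]
        have h0 : (if l = k then (1 : ℝ) else 0) * x l = 0 := by
          by_cases hlk : l = k
          · subst hlk; simp [hxk]
          · simp [hlk]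
        rw [h0]
        have := lam0 l
        have := a0 l
        positivity
      · have h1 := gx l hl x
        have h2 := rs l (fun n => lin (g n) x) (fun n => gnn n x hx)
        have h3 := mul_le_mul_of_nonneg_left (bnd x l _ (hc l)) (lam0 l)
        have h4 : x l ≤ (R * lin (u k) x * κ) * (lam l * a l) := by
          nlinarith
        calc u k l * x l ≤ C * x l := mul_le_mul_of_nonneg_right (hCu k l) (hx l)
          _ ≤ _ := mul_le_mul_of_nonneg_left h4 (by linarith)
    have hsum : lin (u k) x ≤ C * ((R * lin (u k) x * κ) * ∑ l, lam l * a l) := by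
      conv_lhs => rw [lin_apply]
      rw [Finset.mul_sum, Finset.mul_sum]
      exact Finset.sum_le_sum fun l _ => hxl l
    have hs : ∑ l, lam l * a l = N - 1 := by rw [hN]; ring
    rw [hs] at hsum
    have : C * ((R * lin (u k) x * κ) * (N - 1)) < lin (u k) x := by
      calc C * ((R * lin (u k) x * κ) * (N - 1))
          = (C * κ * lin (u k) x) * (R * (N - 1)) := by ring
        _ < (C * κ * lin (u k) x) * (2 * N) := by
          refine mul_lt_mul_of_pos_left (by nlinarith) (by positivity)
        _ = lin (u k) x := by rw [hκ]; field_simp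
    linarith

end lin

/-! ### Continuity of the quotient by a coordinate -/

/-- A `C¹` function vanishing to first order on the face `x i = 0` is `o(x i)` near that face:
compare `x` with its projection on the face by the mean value inequality. -/
lemma continuousOn_div_coord {T : Type} [Fintype T] [DecidableEq T] {G : (T → ℝ) → ℝ}
    (hG : ContDiff ℝ 1 G) (i : T)
    (h : ∀ x : T → ℝ, (∀ l, 0 ≤ x l) → x i = 0 → G x = 0 ∧ fderiv ℝ G x = 0) :
    ContinuousOn (fun x => if 0 < x i then G x / x i else 0) (stdSimplex ℝ T) := by
  intro x0 hx0
  rcases (hx0.1 i).eq_or_lt with h0 | h0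
  · have hd := (h x0 hx0.1 h0.symm).2
    rw [Metric.continuousWithinAt_iff]
    intro ε hε
    have hc : ContinuousAt (fderiv ℝ G) x0 := (hG.continuous_fderiv one_ne_zero).continuousAt
    obtain ⟨δ, hδ, hδ'⟩ := Metric.continuousAt_iff.mp hc (ε / 2) (half_pos hε)
    refine ⟨δ, hδ, fun x hx hxd => ?_⟩
    simp only [← h0, lt_irrefl, if_false]
    split_ifs with hxi
    · have hx'0 : ∀ l, 0 ≤ Function.update x i 0 l := fun l => by
        by_cases hl : l = i
        · subst hl; simp
        · simpa [hl] using hx.1 l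
      have hx'd : dist (Function.update x i 0) x0 < δ := by
        refine lt_of_le_of_lt ((dist_pi_le_iff dist_nonneg).mpr fun l => ?_) hxd
        by_cases hl : l = i
        · subst hl
          simp [← h0]
        · simpa [hl] using dist_le_pi_dist x x0 l
      have hdist : ‖x - Function.update x i 0‖ ≤ x i := by
        refine (pi_norm_le_iff_of_nonneg hxi.le).mpr fun l => ?_
        by_cases hl : l = i
        · subst hl; simp [abs_of_pos hxi]
        · simp [hl, hxi.le]
      have hmv := (convex_ball x0 δ).norm_image_sub_le_of_norm_fderiv_le (𝕜 := ℝ) (f := G)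
        (C := ε / 2) (fun y _ => hG.differentiable one_ne_zero y)
        (fun y hy => by
          have := hδ' (Metric.mem_ball.mp hy)
          rw [hd, dist_zero_right] at this
          exact this.le)
        (Metric.mem_ball.mpr hx'd) (Metric.mem_ball.mpr hxd)
      rw [(h _ hx'0 (by simp)).1, sub_zero] at hmv
      rw [dist_zero_right, norm_div, Real.norm_of_nonneg hxi.le, div_lt_iff₀ hxi]
      calc ‖G x‖ ≤ ε / 2 * x i := hmv.trans (mul_le_mul_of_nonneg_left hdist (half_pos hε).le)
        _ < ε * x i := mul_lt_mul_of_pos_right (half_lt_self hε) hxi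
    · simpa using hε
  · have hev : ∀ᶠ x : T → ℝ in 𝓝 x0, 0 < x i :=
      (isOpen_lt continuous_const (continuous_apply i)).mem_nhds h0
    have hc : ContinuousAt (fun x : T → ℝ => G x / x i) x0 :=
      hG.continuous.continuousAt.div (continuous_apply i).continuousAt h0.ne'
    refine (hc.congr ?_).continuousWithinAt
    filter_upwards [hev] with x hx
    simp [hx]

/-! ### The trace process -/

section trace
variable {T : Type} [Fintype T]

/-- The projection `x ↦ (∑ l, u k l * x l)_{k ∈ B}`, which annihilates `vvec r j` for `j ∉ B` and
maps `vvec r j` to the corresponding vector of the trace process for `j ∈ B`. -/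
def proj (B : Finset T) (u : T → T → ℝ) : (T → ℝ) →L[ℝ] (↥B → ℝ) :=
  ContinuousLinearMap.pi fun k => lin (u k.1)

lemma proj_apply (B : Finset T) (u : T → T → ℝ) (x : T → ℝ) (k : ↥B) :
    proj B u x k = lin (u k.1) x := rfl

lemma sum_univ_eq_sum_coe {B : Finset T} {f : T → ℝ} (hf : ∀ j ∉ B, f j = 0) :
    ∑ j, f j = ∑ j : ↥B, f j.1 := by
  rw [Finset.sum_coe_sort B f]
  exact (Finset.sum_subset (Finset.subset_univ B) fun j _ hj => hf j hj).symm

variable [DecidableEq T]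

lemma lin_of_supp {r : T → T → ℝ} {B : Finset T} {u : T → T → ℝ} (hu : HarmonicExt r B u)
    {x : T → ℝ} (hx : ∀ j ∉ B, x j = 0) {k : T} (hk : k ∈ B) : lin (u k) x = x k := by
  rw [lin_apply, Finset.sum_eq_single k]
  · rw [(hu k hk).1 k hk]; simp
  · intro j _ hj
    by_cases hjB : j ∈ B
    · rw [(hu k hk).1 j hjB]; simp [hj]
    · simp [hx j hjB]
  · simp

lemma proj_ebasis {r : T → T → ℝ} {B : Finset T} {u : T → T → ℝ} (hu : HarmonicExt r B u)
    (j : ↥B) : proj B u (ebasis j.1) = Pi.single j 1 := by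
  funext k
  rw [proj_apply, lin_ebasis, (hu k.1 k.2).1 j.1 j.2, Pi.single_apply]
  by_cases h : k = j
  · subst h; simp
  · have : j.1 ≠ k.1 := fun e => h (Subtype.ext e.symm)
    simp [h, this]

lemma proj_vvec_notMem {r : T → T → ℝ} {B : Finset T} {u : T → T → ℝ} (hu : HarmonicExt r B u)
    {j : T} (hj : j ∉ B) : proj B u (vvec r j) = 0 := by
  funext k
  rw [proj_apply, lin_vvec, (hu k.1 k.2).2 j hj]
  rfl

lemma proj_vvec_mem {r : T → T → ℝ} (hr : ∀ j k, 0 ≤ r j k) (hirr : IrreducibleRates r)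
    {B : Finset T} {u : T → T → ℝ} (hu : HarmonicExt r B u) (j : ↥B) :
    proj B u (vvec r j.1) = vvecB (traceR r u) B j := by
  have hB : B.Nonempty := ⟨j.1, j.2⟩
  have htr : ∀ k : ↥B, k ≠ j → traceR r u j.1 k.1 = gen r (u k.1) j.1 := by
    intro k hk
    have hne : j.1 ≠ k.1 := fun e => hk (Subtype.ext e.symm)
    simp [traceR, hne, gen, (hu k.1 k.2).1 j.1 j.2]
  have hsum : ∑ k : ↥B, gen r (u k.1) j.1 = 0 := by
    rw [Finset.sum_coe_sort B (fun k => gen r (u k) j.1), ← gen_sum]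
    simp [gen, sum_harmonic hr hirr hB hu]
  funext k
  rw [proj_apply, lin_vvec, vvecB, Finset.sum_apply]
  simp only [Pi.smul_apply, Pi.sub_apply, smul_eq_mul, mul_sub, Finset.sum_sub_distrib]
  have e1 : ∑ k' : ↥B, traceR r u j.1 k'.1 * (Pi.single k' 1 : ↥B → ℝ) k = traceR r u j.1 k.1 := by
    simp [Pi.single_apply]
  rw [e1, ← Finset.sum_mul]
  by_cases hkj : k = j
  · subst hkj
    have e2 : ∑ k' : ↥B, traceR r u k.1 k'.1 = - gen r (u k.1) k.1 := by
      rw [← Finset.add_sum_erase _ _ (Finset.mem_univ k)] at hsum ⊢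
      rw [Finset.sum_congr rfl fun k' hk' => htr k' (Finset.ne_of_mem_erase hk')]
      have : traceR r u k.1 k.1 = 0 := by simp [traceR]
      rw [this]
      linarith
    rw [e2]
    simp [traceR]
  · simp [hkj, htr k hkj]

/-- The carré du champ of a bilinear form `H` expressed by generators. -/
lemma quad_identity {ι V : Type*} [Fintype ι] [NormedAddCommGroup V] [NormedSpace ℝ V]
    (H : V →L[ℝ] V →L[ℝ] ℝ) (ρ : ι → ℝ) (P : ι → V) (o : V) :
    ∑ k, ρ k * H (P k - o) (P k - o) = ∑ k, ρ k * (H (P k) (P k) - H o o) -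
      (H (∑ k, ρ k • (P k - o)) o + H o (∑ k, ρ k • (P k - o))) := by
  simp only [map_sum, map_smul, _root_.sum_apply, smul_apply, ← Finset.sum_add_distrib,
    ← Finset.sum_sub_distrib]
  refine Finset.sum_congr rfl fun k _ => ?_
  simp only [map_sub, sub_apply, smul_eq_mul]
  ring

/-- The Dirichlet forms of the chain and of its trace agree on harmonic extensions. Invariance of
`m` for the trace rates is obtained by applying invariance of `m` to a harmonic extension. -/
lemma second_order_trace {r : T → T → ℝ} (hr : ∀ j k, 0 ≤ r j k) (hirr : IrreducibleRates r)
    {m : T → ℝ} (hinv : ∀ f : T → ℝ, ∑ j, m j * gen r f j = 0)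
    {B : Finset T} {u : T → T → ℝ} (hu : HarmonicExt r B u)
    (H : (↥B → ℝ) →L[ℝ] (↥B → ℝ) →L[ℝ] ℝ) :
    ∑ j, ∑ k, m j * r j k * H (proj B u (ebasis k - ebasis j)) (proj B u (ebasis k - ebasis j)) =
      ∑ j : ↥B, ∑ k : ↥B, m j.1 * traceR r u j.1 k.1 *
        H ((Pi.single k 1 : ↥B → ℝ) - Pi.single j 1) ((Pi.single k 1 : ↥B → ℝ) - Pi.single j 1) := by
  set P : T → (↥B → ℝ) := fun j => proj B u (ebasis j) with hP
  set Q : T → ℝ := fun j => H (P j) (P j) with hQ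
  have hV : ∀ j, ∑ k, r j k • (P k - P j) = proj B u (vvec r j) := fun j => by
    simp [hP, vvec, map_sum]
  have hL : ∀ j, ∑ k, m j * r j k * H (proj B u (ebasis k - ebasis j))
      (proj B u (ebasis k - ebasis j)) = m j * gen r Q j -
        m j * (H (proj B u (vvec r j)) (P j) + H (P j) (proj B u (vvec r j))) := by
    intro j
    simp only [map_sub (proj B u), mul_assoc, ← Finset.mul_sum, ← mul_sub]
    rw [quad_identity H (r j) P (P j), hV]
    rfl
  have hR : ∀ j : ↥B, ∑ k : ↥B, m j.1 * traceR r u j.1 k.1 *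
      H ((Pi.single k 1 : ↥B → ℝ) - Pi.single j 1) ((Pi.single k 1 : ↥B → ℝ) - Pi.single j 1) =
      m j.1 * gen r (fun l => ∑ k : ↥B, Q k.1 * u k.1 l) j.1 -
        m j.1 * (H (proj B u (vvec r j.1)) (P j.1) + H (P j.1) (proj B u (vvec r j.1))) := by
    intro j
    simp only [mul_assoc, ← Finset.mul_sum, ← mul_sub]
    rw [quad_identity H (fun k : ↥B => traceR r u j.1 k.1) (fun k => Pi.single k 1) (Pi.single j 1)]
    have e1 : ∑ k : ↥B, traceR r u j.1 k.1 • ((Pi.single k 1 : ↥B → ℝ) - Pi.single j 1) =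
      proj B u (vvec r j.1) := (proj_vvec_mem hr hirr hu j).symm
    have e2 : P j.1 = Pi.single j 1 := proj_ebasis hu j
    rw [e1, e2]
    congr 2
    -- both sides are the linear form with coefficients `Q` evaluated at the trace vector
    have e3 : ∀ k : ↥B, Q k.1 = H (Pi.single k 1) (Pi.single k 1) := fun k => by
      simp only [hQ]
      rw [show P k.1 = Pi.single k 1 from proj_ebasis hu k]
    have e4 : gen r (fun l => ∑ k : ↥B, Q k.1 * u k.1 l) j.1 =
        ∑ k : ↥B, Q k.1 * proj B u (vvec r j.1) k := by
      have := gen_sum r Finset.univ (fun k : ↥B => Q k.1 • u k.1) j.1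
      simp only [Pi.smul_apply, smul_eq_mul] at this
      rw [this]
      exact Finset.sum_congr rfl fun k _ => by rw [gen_smul, proj_apply, lin_vvec]
    rw [e4, ← e1]
    simp only [← e3, Finset.sum_apply, Pi.smul_apply, Pi.sub_apply, smul_eq_mul, Finset.mul_sum]
    rw [Finset.sum_comm]
    refine Finset.sum_congr rfl fun k _ => ?_
    have e5 : ∀ i : ↥B, Q i.1 * (traceR r u j.1 k.1 *
        ((Pi.single k 1 : ↥B → ℝ) i - (Pi.single j 1 : ↥B → ℝ) i)) =
        traceR r u j.1 k.1 * (Q i.1 * (Pi.single k 1 : ↥B → ℝ) i) -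
        traceR r u j.1 k.1 * (Q i.1 * (Pi.single j 1 : ↥B → ℝ) i) := fun i => by ring
    simp only [e5, Finset.sum_sub_distrib, ← Finset.mul_sum]
    simp only [Pi.single_apply, mul_ite, mul_one, mul_zero, Finset.sum_ite_eq', Finset.mem_univ,
      if_true]
    ring
  simp only [hL, hR, Finset.sum_sub_distrib]
  congr 1
  · have h1 : ∀ j ∉ B, m j * gen r (fun l => ∑ k : ↥B, Q k.1 * u k.1 l) j = 0 := by
      intro j hj
      have := gen_sum r Finset.univ (fun k : ↥B => Q k.1 • u k.1) j
      simp only [Pi.smul_apply, smul_eq_mul] at this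
      rw [this, Finset.sum_eq_zero, mul_zero]
      intro k _
      rw [gen_smul, (hu k.1 k.2).2 j hj, mul_zero]
    rw [hinv, ← sum_univ_eq_sum_coe h1, hinv]
  · refine sum_univ_eq_sum_coe fun j hj => ?_
    simp [proj_vvec_notMem hu hj]

lemma second_comp {E E' : Type*} [NormedAddCommGroup E] [NormedSpace ℝ E] [NormedAddCommGroup E']
    [NormedSpace ℝ E'] {f : E → ℝ} (L : E' →L[ℝ] E) {x : E'} (hf : ContDiffAt ℝ 2 f (L x))
    {F : E' → ℝ} (hF : F =ᶠ[𝓝 x] fun y => f (L y)) (d : E') :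
    fderiv ℝ F x d = fderiv ℝ f (L x) (L d) ∧
    fderiv ℝ (fun y => fderiv ℝ F y d) x d = fderiv ℝ (fderiv ℝ f) (L x) (L d) (L d) := by
  have hev : ∀ᶠ y in 𝓝 x, DifferentiableAt ℝ f (L y) := by
    have h := hf.eventually (by simp)
    exact (L.continuous.continuousAt.eventually h).mono
      fun y hy => hy.differentiableAt two_ne_zero
  have h1 : ∀ᶠ y in 𝓝 x, fderiv ℝ F y = (fderiv ℝ f (L y)).comp L := by
    filter_upwards [hF.eventuallyEq_nhds, hev] with y hy hd
    have := fderiv_comp y hd L.differentiableAt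
    rw [L.fderiv] at this
    rw [hy.fderiv_eq]
    exact this
  refine ⟨by rw [h1.self_of_nhds]; rfl, ?_⟩
  have ddf := (hf.fderiv_right (m := 1) (by norm_num)).differentiableAt one_ne_zero
  have h2 : (fun y => fderiv ℝ F y d) =ᶠ[𝓝 x] fun y => (fun z => fderiv ℝ f z (L d)) (L y) :=
    h1.mono fun y hy => by simp [hy]
  have h3 : DifferentiableAt ℝ (fun z => fderiv ℝ f z (L d)) (L x) :=
    ddf.clm_apply (differentiableAt_const _)
  have h4 := fderiv_comp x h3 L.differentiableAt
  rw [L.fderiv] at h4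
  rw [h2.fderiv_eq, ← fderiv_fderiv_apply hf]
  exact congrArg (fun A => A d) h4

end trace

/-! ### The factors of the extension -/

section factor
variable {T : Type} [Fintype T]

/-- The coordinates `(γ, τ)` of a point: `γ = lin a x` and `τ j = lin (w j) x`. -/
def coords (a : T → ℝ) (w : T → T → ℝ) : (T → ℝ) →L[ℝ] ℝ × (T → ℝ) :=
  (lin a).prod (ContinuousLinearMap.pi fun j => lin (w j))

/-- On the face `x k = 0` the factor attached to `k` is flat. -/
lemma factor_flat {χ : ℝ → ℝ} {q R : ℝ} (hq : 2 < q)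
    (hχC : ContDiff ℝ 2 χ) (hχ0 : ∀ s, R ≤ |s| → χ s = 0)
    {a : T → ℝ} {w : T → T → ℝ} {x : T → ℝ}
    (hx : 0 < lin a x → ∃ j, R * lin a x < |lin (w j) x|) :
    Flat (fun y => theta T χ q (coords a w y)) x := by
  obtain ⟨hC, h0⟩ := theta_C2 (T := T) hq hχC hχ0
  refine Flat.comp hC (coords a w) ?_
  by_cases hz : coords a w x = 0
  · rw [hz]; exact h0
  rcases lt_trichotomy (lin a x) 0 with hg | hg | hg
  · exact Flat.of_eventuallyEq (theta_eventually_zero hχ0 (Or.inl hg))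
  · have : ∃ j, lin (w j) x ≠ 0 := by
      by_contra! hc
      exact hz (Prod.ext hg (funext hc))
    obtain ⟨j, hj⟩ := this
    refine Flat.of_eventuallyEq (theta_eventually_zero hχ0 (Or.inr ⟨j, ?_⟩))
    have e : (coords a w x).1 = 0 := hg
    rw [e, mul_zero]
    exact abs_pos.mpr hj
  · exact Flat.of_eventuallyEq (theta_eventually_zero hχ0 (Or.inr (hx hg)))

/-- Where all `τ j` are small compared with `γ`, the factor is `γ ^ q`. -/
lemma factor_eventuallyEq {χ : ℝ → ℝ} {q : ℝ} (hχ1 : ∀ s, |s| ≤ 1 → χ s = 1)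
    {a : T → ℝ} {w : T → T → ℝ} {x : T → ℝ} (hg : 0 < lin a x) (hw : ∀ j, lin (w j) x = 0) :
    ∀ᶠ y in 𝓝 x, theta T χ q (coords a w y) = lin a y ^ q := by
  have h1 : ∀ᶠ y in 𝓝 x, 0 < lin a y :=
    (isOpen_lt continuous_const (lin a).continuous).mem_nhds hg
  have h2 : ∀ᶠ y in 𝓝 x, ∀ j, |lin (w j) y| < lin a y := by
    rw [eventually_all]
    intro j
    exact (isOpen_lt (lin (w j)).continuous.abs (lin a).continuous).mem_nhds
      (by simpa [hw j] using hg)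
  filter_upwards [h1, h2] with y hy1 hy2
  have e : theta T χ q (coords a w y) = lin a y ^ q * ∏ j, χ (lin (w j) y / lin a y) :=
    if_pos hy1
  rw [e, Finset.prod_eq_one, mul_one]
  intro j _
  apply hχ1
  rw [abs_div, abs_of_pos hy1, div_le_one hy1]
  exact (hy2 j).le

variable [DecidableEq T]

/-- On the face `x i = 0` with `i ∉ B`, a factor is locally constant in the direction
`vvec r i`, or flat. -/
lemma factor_dirFlat {r : T → T → ℝ} {χ : ℝ → ℝ} {q R : ℝ} (hq : 2 < q)
    (hχC : ContDiff ℝ 2 χ) (hχ1 : ∀ s, |s| ≤ 1 → χ s = 1) (hχ0 : ∀ s, R ≤ |s| → χ s = 0)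
    {a : T → ℝ} {w : T → T → ℝ} {i : T} (ha : gen r a i = 0)
    (hw : ∀ j, j ≠ i → gen r (w j) i = 0) {x : T → ℝ}
    (hx : 0 < lin a x → (∀ j, |lin (w j) x| ≤ R * lin a x) → |lin (w i) x| < lin a x) :
    DirFlat (fun y => theta T χ q (coords a w y)) (vvec r i) x := by
  obtain ⟨hC, h0⟩ := theta_C2 (T := T) hq hχC hχ0
  have hΨ : ContDiff ℝ 2 (fun y => theta T χ q (coords a w y)) :=
    hC.comp (coords a w).contDiff
  have hflat : Flat (theta T χ q) (coords a w x) →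
      DirFlat (fun y => theta T χ q (coords a w y)) (vvec r i) x := fun h =>
    (Flat.comp hC (coords a w) h).dirFlat hΨ _
  by_cases hz : coords a w x = 0
  · exact hflat (hz ▸ h0)
  by_cases hj : ∃ j, R * lin a x < |lin (w j) x|
  · exact hflat (Flat.of_eventuallyEq (theta_eventually_zero hχ0 (Or.inr hj)))
  push Not at hj
  rcases lt_trichotomy (lin a x) 0 with hg | hg | hg
  · exact hflat (Flat.of_eventuallyEq (theta_eventually_zero hχ0 (Or.inl hg)))
  · refine absurd (Prod.ext hg (funext fun j => ?_)) hz
    have := hj j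
    rw [hg, mul_zero] at this
    exact abs_nonpos_iff.mp this
  · -- where the `i`-th cutoff equals one, the factor does not depend on the `i`-th coordinate
    have hi := hx hg hj
    let O : Set (T → ℝ) := {y | 0 < lin a y ∧ |lin (w i) y| < lin a y}
    have hO : IsOpen O := (isOpen_lt continuous_const (lin a).continuous).inter
      (isOpen_lt (lin (w i)).continuous.abs (lin a).continuous)
    have hval : ∀ y ∈ O, theta T χ q (coords a w y) =
        lin a y ^ q * ∏ j ∈ Finset.univ.erase i, χ (lin (w j) y / lin a y) := by
      rintro y ⟨h1, h2⟩
      have h3 : χ (lin (w i) y / lin a y) = 1 := by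
        apply hχ1
        rw [abs_div, abs_of_pos h1, div_le_one h1]
        exact h2.le
      have h4 : theta T χ q (coords a w y) =
          lin a y ^ q * ∏ j, χ (lin (w j) y / lin a y) := if_pos h1
      rw [h4, ← Finset.mul_prod_erase _ _ (Finset.mem_univ i), h3, one_mul]
    refine DirFlat.of_const hΨ ?_
    filter_upwards [hO.mem_nhds (show x ∈ O from ⟨hg, hi⟩)] with y hy
    have hcont : ContinuousAt (fun s : ℝ => y + s • vvec r i) 0 := by fun_prop
    have hmem : ∀ᶠ s : ℝ in 𝓝 0, y + s • vvec r i ∈ O :=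
      hcont.eventually (hO.mem_nhds (by simpa using hy))
    filter_upwards [hmem] with s hs
    have ea : lin a (y + s • vvec r i) = lin a y := by simp [lin_vvec, ha]
    rw [hval _ hs, hval _ hy, ea]
    congr 1
    refine Finset.prod_congr rfl fun j hj' => ?_
    have ew : lin (w j) (y + s • vvec r i) = lin (w j) y := by
      simp [lin_vvec, hw j (Finset.ne_of_mem_erase hj')]
    rw [ew]

end factor

/-! ### The extension -/

/-- extension of f(x) = ∏_{j∈D} x_j^{p+1} to a function F ∈ 𝓓_{A∪D}. -/
theorem statement13
    (S : Type) [Fintype S] [DecidableEq S] (hS : 2 ≤ Fintype.card S)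
    (r : S → S → ℝ) (hr : ∀ j k, 0 ≤ r j k) (hrdiag : ∀ j, r j j = 0)
    (hirr : IrreducibleRates r)
    (m : S → ℝ) (hm : ∀ j, 0 < m j)
    (hinv : ∀ f : S → ℝ, ∑ j, m j * gen r f j = 0)
    (b : ℝ) (hb : 1 < b)
    (B : Finset S) (hBcard : 2 ≤ B.card)
    (u : S → S → ℝ) (hu : HarmonicExt r B u)
    (D : Finset S) (hD : D ⊆ B) (hDne : D.Nonempty)
    (p : ℝ) (hp : 1 < p) :
    ∃ F : (S → ℝ) → ℝ,
      (∀ j : S, (j ∉ B ∨ j ∈ D) → memD r j F) ∧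
      (∀ x ∈ stdSimplex ℝ S, (∀ j ∉ B, x j = 0) →
          F x = ∏ j ∈ D, x j ^ (p + 1)) ∧
      (∀ x ∈ stdSimplex ℝ S, (∀ j ∉ B, x j = 0) → (∀ j ∈ B, 0 < x j) →
          Lop r m b F x
            = LopB (traceR r u) m b B
                (fun y : ↥B → ℝ => ∏ j : ↥B, if j.1 ∈ D then y j ^ (p + 1) else 1)
                (restB B x)) ∧
      (∀ x ∈ stdSimplex ℝ S, (∏ j ∈ D, x j) = 0 → Lop r m b F x = 0) := by
  have hB : B.Nonempty := Finset.card_pos.mp (by omega)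
  have hq : 2 < p + 1 := by linarith
  obtain ⟨R, w, hR1, hwA, hwB, hcA, hcD⟩ := exists_coords hr hrdiag hirr hB hu
  -- `χ` is one on `[-1, 1]` and zero outside `(-R, R)`
  let bump : ContDiffBump (0 : ℝ) := ⟨1, R, one_pos, hR1⟩
  set χ : ℝ → ℝ := fun s => bump s with hχ
  have hχC : ContDiff ℝ 2 χ := bump.contDiff
  have hχ1 : ∀ s, |s| ≤ 1 → χ s = 1 := fun s hs =>
    bump.one_of_mem_closedBall (by simpa using hs)
  have hχ0 : ∀ s, R ≤ |s| → χ s = 0 := fun s hs =>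
    bump.zero_of_le_dist (by simpa using hs)
  set Ψ : S → (S → ℝ) → ℝ := fun k y => theta S χ (p + 1) (coords (u k) w y) with hΨ
  have hΨC : ∀ k, ContDiff ℝ 2 (Ψ k) := fun k =>
    (theta_C2 hq hχC hχ0).1.comp (coords (u k) w).contDiff
  set F : (S → ℝ) → ℝ := fun y => ∏ k ∈ D, Ψ k y with hF
  have hFC : ContDiff ℝ 2 F := contDiff_prod fun k _ => hΨC k
  have hFflat : ∀ k ∈ D, ∀ x : S → ℝ, (∀ l, 0 ≤ x l) → x k = 0 → Flat F x := by
    intro k hk x hx hxk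
    exact Flat.prod D (fun k _ => hΨC k) hk
      (factor_flat hq hχC hχ0 (hcD k (hD hk) x hx hxk))
  refine ⟨F, fun j hj => ⟨hFC, ?_⟩, ?_, ?_, ?_⟩
  · refine continuousOn_div_coord
      ((hFC.fderiv_right (m := 1) (by norm_num)).clm_apply contDiff_const) j fun x hx hxj => ?_
    change DirFlat F (vvec r j) x
    rcases hj with hj | hj
    · exact DirFlat.prod D (fun k _ => hΨC k) fun k hk =>
        factor_dirFlat hq hχC hχ1 hχ0 ((hu k (hD hk)).2 j hj) (hwA j hj)
          (hcA j hj x hx hxj (lin (u k) x))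
    · exact (hFflat j hj x hx hxj).dirFlat hFC _
  · intro x hx hxA
    refine Finset.prod_congr rfl fun k hk => ?_
    have hw0 : ∀ j, lin (w j) x = 0 := fun j => by
      rw [lin_apply]
      refine Finset.sum_eq_zero fun l _ => ?_
      by_cases hl : l ∈ B
      · simp [hwB j l hl]
      · simp [hxA l hl]
    have hg : lin (u k) x = x k := lin_of_supp hu hxA (hD hk)
    rcases (hx.1 k).eq_or_lt with h0 | h0
    · rw [← h0, Real.zero_rpow (by linarith)]
      exact if_neg (by change ¬ 0 < lin (u k) x; rw [hg, ← h0]; exact lt_irrefl 0)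
    · rw [← hg]
      exact (factor_eventuallyEq hχ1 (hg ▸ h0) hw0).self_of_nhds
  · intro x hx hxA hxB
    have hw0 : ∀ j, lin (w j) x = 0 := fun j => by
      rw [lin_apply]
      refine Finset.sum_eq_zero fun l _ => ?_
      by_cases hl : l ∈ B
      · simp [hwB j l hl]
      · simp [hxA l hl]
    have hpr : proj B u x = restB B x := funext fun k => lin_of_supp hu hxA k.2
    set f : (↥B → ℝ) → ℝ := fun y => ∏ j : ↥B, if j.1 ∈ D then y j ^ (p + 1) else 1 with hf
    have hfC : ContDiffAt ℝ 2 f (proj B u x) := by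
      refine contDiffAt_prod fun j _ => ?_
      by_cases hj : j.1 ∈ D
      · simp only [hj, if_true]
        refine (contDiffAt_pi.mp contDiffAt_id j).rpow_const_of_ne ?_
        simp only [hpr]
        exact (hxB j.1 j.2).ne'
      · simp only [hj, if_false]
        exact contDiffAt_const
    have hFf : F =ᶠ[𝓝 x] fun y => f (proj B u y) := by
      have : ∀ᶠ y in 𝓝 x, ∀ k ∈ D, Ψ k y = lin (u k) y ^ (p + 1) := by
        rw [Filter.eventually_all_finset]
        intro k hk
        refine factor_eventuallyEq hχ1 ?_ hw0
        rw [lin_of_supp hu hxA (hD hk)]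
        exact hxB k (hD hk)
      filter_upwards [this] with y hy
      simp only [hF, hf]
      rw [Finset.prod_congr rfl hy, ← Finset.prod_subset (Finset.subset_univ (D.subtype (· ∈ B)))]
      · rw [Finset.prod_congr rfl (g := fun j : ↥B => lin (u j.1) y ^ (p + 1))]
        · rw [Finset.prod_subtype_of_mem (fun k => lin (u k) y ^ (p + 1)) hD]
        · intro j hj
          rw [if_pos (by simpa using hj)]
          rfl
      · intro j _ hj
        rw [if_neg (by simpa using hj)]
    have h1 : ∀ d, fderiv ℝ F x d = fderiv ℝ f (restB B x) (proj B u d) := fun d => by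
      rw [← hpr]; exact (second_comp (proj B u) hfC hFf d).1
    have h2 : ∀ d, secondD F d x =
        fderiv ℝ (fderiv ℝ f) (restB B x) (proj B u d) (proj B u d) := fun d => by
      rw [← hpr]; exact (second_comp (proj B u) hfC hFf d).2
    rw [hpr] at hfC
    simp only [Lop, LopB, h1, h2, fderiv_fderiv_apply hfC]
    rw [second_order_trace hr hirr hinv hu]
    congr 2
    rw [sum_univ_eq_sum_coe (B := B) (fun j hj => by simp [hxA j hj])]
    refine Finset.sum_congr rfl fun j _ => ?_
    have hj := hxB j.1 j.2
    rw [if_pos hj.ne', if_pos (show 0 < restB B x j from hj), proj_vvec_mem hr hirr hu j]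
    rfl
  · intro x hx hprod
    obtain ⟨k, hk, hxk⟩ := Finset.prod_eq_zero_iff.mp hprod
    have hfl := hFflat k hk x hx.1 hxk
    have h2 : ∀ d, secondD F d x = 0 := fun d => by
      rw [secondD, fderiv_fderiv_apply hFC.contDiffAt, hfl.2.2]; simp
    simp [Lop, h2, hfl.2.1]
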